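/- Let μ be a Borel probability measure on ℝ with μ([0,1]) = 1 and with no atoms, and let 0 < ε < 1. Then there exist an integer M ≥ 1 and points 0 = x_0 < x_1 < x_2 < ... < x_M = 1 with ε/3 < x_{i+1} − x_i < ε for all 0 ≤ i < M, such that for every η > 0, μ(⋃_{i=1}^{M−1} (x_i − η, x_i)) ≤ 6η/ε and μ(⋃_{i=1}^{M−1} (x_i, x_i + η)) ≤ 6η/ε. -/

import Mathlib

open MeasureTheory

/-- A two-sided rising sun lemma: if `f` is monotone, right-continuous, and grows by at most `1` over
each period `p`, then any interval of length more than `2 / c` inside one period contains a point from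
which all slopes of `f`, to the left and to the right, are at most `c`. -/
theorem exists_forall_slope_le {f : ℝ → ℝ} {C c p a b : ℝ} (hf : Monotone f)
    (hrc : ∀ t, ContinuousWithinAt f (Set.Ici t) t) (hf0 : ∀ t, 0 ≤ f t) (hfC : ∀ t, f t ≤ C)
    (hfp : ∀ t, f (t + p) ≤ f t + 1) (hc : 0 < c) (hab : a ≤ b) (hbp : b ≤ a + p)
    (hlen : 2 < c * (b - a)) :
    ∃ s ∈ Set.Ico a b, (∀ u, s ≤ u → f u - f s ≤ c * (u - s)) ∧
      ∀ u, u ≤ s → f s - f u ≤ c * (s - u) := by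
  have hsup : ∀ t, ∃ y, IsLUB ((fun u => f u - c * u) '' Set.Ici t) y := fun t =>
    ⟨_, isLUB_csSup (Set.nonempty_Ici.image _) ⟨C - c * t, by
      rintro _ ⟨u, hu, rfl⟩
      have := mul_le_mul_of_nonneg_left (Set.mem_Ici.1 hu) hc.le
      have := hfC u
      dsimp only
      linarith⟩⟩
  have hinf : ∀ t, ∃ y, IsGLB ((fun u => f u - c * u) '' Set.Iic t) y := fun t =>
    ⟨_, isGLB_csInf (Set.nonempty_Iic.image _) ⟨-(c * t), by
      rintro _ ⟨u, hu, rfl⟩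
      have := mul_le_mul_of_nonneg_left (Set.mem_Iic.1 hu) hc.le
      have := hf0 u
      dsimp only
      linarith⟩⟩
  choose H hH using hsup
  choose K hK using hinf
  have le_H : ∀ {t u}, t ≤ u → f u - c * u ≤ H t := fun {t u} h => (hH t).1 ⟨u, h, rfl⟩
  have H_le : ∀ {t y}, (∀ u, t ≤ u → f u - c * u ≤ y) → H t ≤ y := fun {t y} h =>
    (hH t).2 (by rintro _ ⟨u, hu, rfl⟩; exact h u hu)
  have K_le : ∀ {t u}, u ≤ t → K t ≤ f u - c * u := fun {t u} h => (hK t).1 ⟨u, h, rfl⟩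
  have le_K : ∀ {t y}, (∀ u, u ≤ t → y ≤ f u - c * u) → y ≤ K t := fun {t y} h =>
    (hK t).2 (by rintro _ ⟨u, hu, rfl⟩; exact h u hu)
  have H_anti : Antitone H := fun t t' h => H_le fun u hu => le_H (h.trans hu)
  have K_anti : Antitone K := fun t t' h => le_K fun u hu => K_le (hu.trans h)
  have H_drop : ∀ {t t'}, t ≤ t' → H t ≤ H t' + c * (t' - t) := by
    intro t t' h
    refine H_le fun u hu => ?_
    rcases le_total t' u with h' | h'
    · have := le_H h'
      have := mul_nonneg hc.le (sub_nonneg.2 h)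
      linarith
    · have := le_H (le_refl t')
      have := hf h'
      have := mul_le_mul_of_nonneg_left hu hc.le
      linarith
  have K_drop : ∀ {t t'}, t ≤ t' → K t ≤ K t' + c * (t' - t) := by
    intro t t' h
    rw [← sub_le_iff_le_add]
    refine le_K fun u hu => ?_
    rcases le_total u t with h' | h'
    · have := K_le h'
      have := mul_nonneg hc.le (sub_nonneg.2 h)
      linarith
    · have := K_le (le_refl t)
      have := hf h'
      have := mul_le_mul_of_nonneg_left hu hc.le
      linarith
  have H_period : ∀ t, H (t + p) + (c * p - 1) ≤ H t := by
    intro t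
    rw [← le_sub_iff_add_le]
    refine H_le fun u hu => ?_
    have := le_H (t := t) (u := u - p) (by linarith)
    have := hfp (u - p)
    rw [sub_add_cancel] at this
    linarith
  have K_period : ∀ t, K (t + p) + (c * p - 1) ≤ K t := by
    intro t
    refine le_K fun u hu => ?_
    have := K_le (t := t + p) (u := u + p) (by linarith)
    have := hfp u
    linarith
  have cont : ∀ {G : ℝ → ℝ}, Antitone G → (∀ {t t'}, t ≤ t' → G t ≤ G t' + c * (t' - t)) →
      Continuous G := by
    intro G hG hGd
    refine (LipschitzWith.of_le_add_mul ⟨c, hc.le⟩ fun x y => ?_).continuous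
    rcases le_total x y with h | h
    · rw [Real.dist_eq, abs_sub_comm, abs_of_nonneg (sub_nonneg.2 h)]
      exact hGd h
    · exact (hG h).trans (le_add_of_nonneg_right (mul_nonneg hc.le dist_nonneg))
  have H_cont : Continuous H := cont H_anti H_drop
  have K_cont : Continuous K := cont K_anti K_drop
  by_contra! hbad
  have key : Set.Icc a b ⊆ {t | H a + K a + c * a ≤ H t + K t + c * t} := by
    refine IsClosed.Icc_subset_of_forall_mem_nhdsWithin ?_ (le_refl (H a + K a + c * a)) ?_
    · exact (isClosed_le continuous_const (by fun_prop)).inter isClosed_Icc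
    · rintro t ⟨ht, htab⟩
      have step : ∀ᶠ t' in nhdsWithin t (Set.Ioi t),
          H t + K t + c * t ≤ H t' + K t' + c * t' := by
        by_cases hr : ∀ u, t ≤ u → f u - f t ≤ c * (u - t)
        · obtain ⟨u, hut, hu⟩ := hbad t htab hr
          have hlim : ∀ᶠ v in nhdsWithin t (Set.Ioi t), f u - c * u < f t - c * v :=
            nhdsWithin_le_nhds ((Continuous.tendsto (by fun_prop) t).eventually
              (lt_mem_nhds (by linarith)))
          filter_upwards [hlim, self_mem_nhdsWithin] with t' ht' htt'
          have htt' : t ≤ t' := (Set.mem_Ioi.1 htt').le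
          have hKt : K t ≤ K t' := by
            refine le_K fun v hv => ?_
            rcases le_total v t with h | h
            · exact K_le h
            · have := K_le hut
              have := hf h
              have := mul_le_mul_of_nonneg_left hv hc.le
              linarith
          have := H_drop htt'
          linarith
        · push Not at hr
          obtain ⟨u, htu, hu⟩ := hr
          have hlt : f t - c * t < f u - c * u := by linarith
          have hne : t < u := lt_of_le_of_ne htu (by rintro rfl; exact lt_irrefl _ hlt)
          have hrc' : ContinuousWithinAt (fun v => f v - c * v) (Set.Ici t) t :=
            (hrc t).sub (by fun_prop)
          have hlim : ∀ᶠ v in nhdsWithin t (Set.Ici t), f v - c * v < f u - c * u :=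
            hrc'.eventually (gt_mem_nhds hlt)
          obtain ⟨w, hw, hwsub⟩ := (mem_nhdsGE_iff_exists_Ico_subset' hne).1 hlim
          filter_upwards [Ioo_mem_nhdsGT (lt_min hw hne)] with t' ht'
          have htt' : t ≤ t' := ht'.1.le
          have hw' : t' < w := ht'.2.trans_le (min_le_left _ _)
          have hu' : t' ≤ u := (ht'.2.trans_le (min_le_right _ _)).le
          have hHt : H t ≤ H t' := by
            refine H_le fun v hv => ?_
            rcases le_total t' v with h | h
            · exact le_H h
            · have hv' : f v - c * v < f u - c * u := hwsub ⟨hv, h.trans_lt hw'⟩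
              exact hv'.le.trans (le_H hu')
          have := K_drop htt'
          linarith
      exact step.mono fun t' h => le_trans ht h
  have hb : H a + K a + c * a ≤ H b + K b + c * b := key ⟨hab, le_rfl⟩
  have := H_period a
  have := K_period a
  have := H_drop hbp
  have := K_drop hbp
  linarith

/-- Lemma 9 (smart partition lemma): for any atomless Borel probability measure
on `[0,1]` and `0 < ε < 1`, there is a partition `0 = x₀ < x₁ < ⋯ < x_M = 1`
with gaps strictly between `ε/3` and `ε` such that for every `η > 0`, the
`η`-neighborhoods on either side of the interior boundary points carry mass
at most `6η/ε`. -/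
theorem stmt_4 (μ : Measure ℝ) [IsProbabilityMeasure μ]
    (hμ1 : μ (Set.Icc (0 : ℝ) 1) = 1) (hatom : ∀ t : ℝ, μ {t} = 0)
    (ε : ℝ) (hε : 0 < ε) (hε1 : ε < 1) :
    ∃ (M : ℕ) (x : ℕ → ℝ), 1 ≤ M ∧ x 0 = 0 ∧ x M = 1 ∧
      (∀ i < M, ε / 3 < x (i + 1) - x i ∧ x (i + 1) - x i < ε) ∧
      (∀ η > (0 : ℝ),
        μ (⋃ i ∈ Finset.Ico 1 M, Set.Ioo (x i - η) (x i)) ≤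
          ENNReal.ofReal (6 * η / ε) ∧
        μ (⋃ i ∈ Finset.Ico 1 M, Set.Ioo (x i) (x i + η)) ≤
          ENNReal.ofReal (6 * η / ε)) := by
  obtain ⟨k, hk1, hk2⟩ : ∃ k : ℕ, ε < 1 - k * (ε / 2) ∧ 1 - k * (ε / 2) ≤ 3 * ε / 2 := by
    have hpos : 0 < (1 - ε) / (ε / 2) := div_pos (by linarith) (by linarith)
    obtain ⟨k, hk⟩ := Nat.exists_eq_succ_of_ne_zero (Nat.ceil_pos.2 hpos).ne'
    have h1 := Nat.le_ceil ((1 - ε) / (ε / 2))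
    have h2 := Nat.ceil_lt_add_one hpos.le
    rw [hk] at h1 h2
    push_cast at h1 h2
    rw [div_le_iff₀ (by linarith)] at h1
    have h3 := (lt_div_iff₀ (by linarith)).1 (lt_of_add_lt_add_right h2)
    exact ⟨k, by linarith, by linarith⟩
  set L := 1 - k * (ε / 2) with hL
  let F := ProbabilityTheory.cdf μ
  let f : ℝ → ℝ := fun t => ∑ j ∈ Finset.range (k + 1), F (t + j * (ε / 2))
  have hF0 : ∀ t, 0 ≤ F t := ProbabilityTheory.cdf_nonneg μ
  have hF1 : ∀ t, F t ≤ 1 := ProbabilityTheory.cdf_le_one μ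
  have hFm : Monotone F := ProbabilityTheory.monotone_cdf μ
  obtain ⟨s, hs, hright, hleft⟩ := exists_forall_slope_le (f := f) (C := k + 1) (c := 6 / ε)
    (p := ε / 2) (a := L / 2 - (ε / 6 + (L - ε) / 8)) (b := L / 2 + (ε / 6 + (L - ε) / 8))
    (fun t u htu => Finset.sum_le_sum fun j _ => hFm (by linarith))
    (fun t => by
      refine tendsto_finsetSum _ fun j _ => ?_
      refine (F.right_continuous (t + j * (ε / 2))).tendsto.comp ?_
      refine tendsto_nhdsWithin_iff.2 ⟨((continuous_add_const _).tendsto t).mono_left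
        nhdsWithin_le_nhds, ?_⟩
      filter_upwards [self_mem_nhdsWithin] with u hu
      exact add_le_add_left (Set.mem_Ici.1 hu) _)
    (fun t => Finset.sum_nonneg fun j _ => hF0 _)
    (fun t => (Finset.sum_le_card_nsmul _ _ 1 fun j _ => hF1 _).trans (by simp))
    (fun t => by
      have h := Finset.sum_range_sub (fun j : ℕ => F (t + j * (ε / 2))) (k + 1)
      rw [Finset.sum_sub_distrib] at h
      have e : f (t + ε / 2) =
          ∑ j ∈ Finset.range (k + 1), F (t + ((j + 1 : ℕ) : ℝ) * (ε / 2)) :=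
        Finset.sum_congr rfl fun j _ => by congr 1; push_cast; ring
      have := hF0 (t + (0 : ℕ) * (ε / 2))
      have := hF1 (t + ((k + 1 : ℕ) : ℝ) * (ε / 2))
      change f (t + ε / 2) ≤ (∑ j ∈ Finset.range (k + 1), F (t + j * (ε / 2))) + 1
      linarith)
    (by positivity) (by linarith) (by linarith)
    (by rw [div_mul_eq_mul_div, lt_div_iff₀ hε]; linarith)
  obtain ⟨hs1, hs2⟩ := hs
  let x : ℕ → ℝ := fun i => if i = 0 then 0 else if i = k + 2 then 1 else s + (i - 1) * (ε / 2)
  have hx0 : x 0 = 0 := if_pos rfl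
  have hxM : x (k + 2) = 1 := by simp [x]
  have hx : ∀ j ≤ k, x (1 + j) = s + j * (ε / 2) := fun j hj => by
    simp only [x]
    rw [if_neg (by omega), if_neg (by omega)]
    push_cast
    ring
  have hcover : ∀ (u v : ℝ → ℝ) (y : ℝ),
      (∑ j ∈ Finset.range (k + 1), (F (v (x (1 + j))) - F (u (x (1 + j)))) ≤ y) →
      (∀ t, u t ≤ v t) →
      μ (⋃ i ∈ Finset.Ico 1 (k + 2), Set.Ioo (u (x i)) (v (x i))) ≤ ENNReal.ofReal y := by
    intro u v y hy huv
    have hIoo : ∀ {r t : ℝ}, μ (Set.Ioo r t) ≤ ENNReal.ofReal (F t - F r) := fun {r t} => by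
      refine (measure_mono Set.Ioo_subset_Ioc_self).trans ?_
      rw [← F.measure_Ioc, ProbabilityTheory.measure_cdf]
    calc _ ≤ ∑ i ∈ Finset.Ico 1 (k + 2), μ (Set.Ioo (u (x i)) (v (x i))) :=
          measure_biUnion_finset_le _ _
      _ ≤ ∑ i ∈ Finset.Ico 1 (k + 2), ENNReal.ofReal (F (v (x i)) - F (u (x i))) :=
          Finset.sum_le_sum fun i _ => hIoo
      _ = ENNReal.ofReal (∑ i ∈ Finset.Ico 1 (k + 2), (F (v (x i)) - F (u (x i)))) :=
          (ENNReal.ofReal_sum_of_nonneg fun i _ => sub_nonneg.2 (hFm (huv _))).symm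
      _ ≤ ENNReal.ofReal y := by
          rw [Finset.sum_Ico_eq_sum_range]
          exact ENNReal.ofReal_le_ofReal hy
  refine ⟨k + 2, x, by omega, hx0, hxM, fun i hi => ?_, fun η hη => ⟨?_, ?_⟩⟩
  · rcases i with _ | j
    · have h1 : x (0 + 1) = s := by simpa using hx 0 (Nat.zero_le k)
      rw [hx0, h1]
      constructor <;> linarith
    · have hj : j ≤ k := by omega
      rw [add_comm j 1, hx j hj]
      rcases hj.eq_or_lt with rfl | hj
      · rw [show 1 + j + 1 = j + 2 by ring, hxM]
        constructor <;> linarith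
      · rw [add_assoc, hx (j + 1) hj]
        push_cast
        constructor <;> linarith
  · refine hcover (fun t => t - η) (fun t => t) _ ?_ (fun t => by linarith)
    have h := hleft (s - η) (by linarith)
    rw [← Finset.sum_sub_distrib] at h
    refine le_trans (le_of_eq (Finset.sum_congr rfl fun j hj => ?_)) (h.trans_eq (by ring))
    rw [hx j (Nat.lt_succ_iff.1 (Finset.mem_range.1 hj)), sub_add_eq_add_sub]
  · refine hcover (fun t => t) (fun t => t + η) _ ?_ (fun t => by linarith)
    have h := hright (s + η) (by linarith)
    rw [← Finset.sum_sub_distrib] at h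
    refine le_trans (le_of_eq (Finset.sum_congr rfl fun j hj => ?_)) (h.trans_eq (by ring))
    rw [hx j (Nat.lt_succ_iff.1 (Finset.mem_range.1 hj)), add_right_comm]
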